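/- Fix q ∈ ℝ with 0 < q < 1 and nonzero A, B, C, D, u ∈ ℂ, let α ∈ ℂ with α² = ABCD/(4q), α ≠ 0, and set z = (u + 1/u)/(2α). Fix n ∈ ℕ and assume: (A;q)_ℓ ≠ 0 and (D;q)_ℓ ≠ 0 for all ℓ ≤ n, (ADu q^{−n}/(2α);q)_ℓ ≠ 0 for all ℓ ≤ n, and (2αu/B;q)_j ≠ 0 and (2αu/C;q)_j ≠ 0 for all j ≤ n. Then the monic associated continuous dual q-Hahn polynomial satisfies P_n(z) = (u/(2α))ⁿ · (A;q)_n (D;q)_n (2αq/(ADu);q)_n / (q;q)_n · ∑_{ℓ=0}^n { [(q^{−n};q)_ℓ (2αu/B;q)_ℓ (2αu/C;q)_ℓ / ((ADu q^{−n}/(2α);q)_ℓ (A;q)_ℓ (D;q)_ℓ)] (AD/(2αu))^ℓ · ∑_{j=0}^ℓ [(A/q;q)_j (D/q;q)_j (ADu/(2α);q)_j / ((q;q)_j (2αu/B;q)_j (2αu/C;q)_j)] (2αuq/(AD))^j }. -/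

import Mathlib

/-!
Put `s = 2α`, `w = ADu/s`, `b = su/B`, `c = su/C`, `U = u⁻²`, so that `bcUq = AD`, `B = cq/w` and
`C = bq/w`. Reversing the shifted factorials that depend on `n` (`gCoef_reversal`) turns the
explicit formula into `P_n = (u/s)^n (A;q)_n (D;q)_n Q_n`, where `Q_n = ∑_l g_{n-l} M_l` is a
convolution, `g_k = (q/w;q)_k/(q;q)_k`, and `M_l` is the weighted inner sum.

The proof is a generating function argument. The weighted inner sums satisfy a first-order
inhomogeneous recurrence (`mCoef_succ`) with right-hand side
`K r_l`, `K = (1 - A/q)(1 - D/q)`, `r_l = (w;q)_l (q/w)^l/(q;q)_l`. With `η f(X) = f(qX)` this reads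
`(1 - UX) M - ((A + D)/q - U(b + c)X) ηM + (AD/q²)(1 - qX) η²M = K r`,
the factor `1 - qX` coming from `bcUq = AD`. Since `(1 - qX/w) ηg = (1 - X) g` and
`(1 - X) r g = 1` (`rSeries_mul_gSeries`), multiplication by `(1 - X) g` gives
`(1 - X)(1 - UX) Q - ((A + D)/q - U(b + c)X)(1 - qX/w) ηQ
  + (AD/q²)(1 - qX/w)(1 - q²X/w) η²Q = K`
(`convCoef_functional`), whose coefficients are exactly the three-term recurrence of the
normalized associated continuous dual `q`-Hahn polynomials, initial values included.
Everything is done in formal power series, modulo `X^(n+1)`, because the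
denominators `(A;q)_l`, `(D;q)_l`, `(b;q)_l`, `(c;q)_l` are only known not to vanish for `l ≤ n`.
-/

open Filter

noncomputable def qp (q a : ℂ) (n : ℕ) : ℂ := ∏ j ∈ Finset.range n, (1 - a * q ^ j)
noncomputable def qpInf (q a : ℂ) : ℂ := ∏' j : ℕ, (1 - a * q ^ j)
noncomputable def phi32 (q a b c d e w : ℂ) : ℂ :=
  ∑' k : ℕ, (qp q a k * qp q b k * qp q c k) / (qp q d k * qp q e k * qp q q k) * w ^ k
noncomputable def phi21 (q a b c w : ℂ) : ℂ :=
  ∑' k : ℕ, (qp q a k * qp q b k) / (qp q c k * qp q q k) * w ^ k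
noncomputable def phi11 (q a b w : ℂ) : ℂ :=
  ∑' k : ℕ, qp q a k / (qp q b k * qp q q k) * (-1) ^ k * q ^ (k * (k - 1) / 2) * w ^ k

noncomputable def Prec {K : Type*} [Field K] (a b2 : ℕ → K) (z : K) : ℕ → K
  | 0 => 1
  | 1 => z - a 0
  | n + 2 => (z - a (n + 1)) * Prec a b2 z (n + 1) - b2 (n + 1) * Prec a b2 z n

noncomputable def aCDH (q A B C D : ℂ) (n : ℕ) : ℂ :=
  (1 / A + 1 / B + 1 / C + 1 / D) * q ^ (n : ℤ) - (1 + q) * q ^ (2 * (n : ℤ) - 1)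

noncomputable def bCDH (q A B C D : ℂ) (n : ℕ) : ℂ :=
  q / (A * B * C * D) * (1 - A * q ^ ((n : ℤ) - 1)) * (1 - B * q ^ ((n : ℤ) - 1)) *
    (1 - C * q ^ ((n : ℤ) - 1)) * (1 - D * q ^ ((n : ℤ) - 1))

/-- `X` solves the associated continuous dual `q`-Hahn recurrence
`X_{n+1} - (z - a_n) X_n + b_n² X_{n-1} = 0` for `n ≥ 1`. -/
def SolvesCDH (q A B C D z : ℂ) (X : ℕ → ℂ) : Prop :=
  ∀ n : ℕ, 1 ≤ n →
    X (n + 1) - (z - aCDH q A B C D n) * X n + bCDH q A B C D n * X (n - 1) = 0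

/-! ### Coefficient sequences and their first-order recurrences -/

/-- The coefficients `(q/w;q)_k / (q;q)_k` of `(qX/w;q)_∞ / (X;q)_∞`. -/
noncomputable def gCoef (q w : ℂ) (k : ℕ) : ℂ := qp q (q / w) k / qp q q k

/-- The coefficients `(w;q)_k (q/w)^k / (q;q)_k` of `(qX;q)_∞ / (qX/w;q)_∞`. -/
noncomputable def rCoef (q w : ℂ) (k : ℕ) : ℂ := qp q w k / qp q q k * (q / w) ^ k

/-- The inner sum over `j`, with `b = 2αu/B`, `c = 2αu/C`, `w = ADu/(2α)`, `y = 2αuq/(AD)`. -/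
noncomputable def innerSum (q A D b c w y : ℂ) (l : ℕ) : ℂ :=
  ∑ j ∈ Finset.range (l + 1),
    (qp q (A / q) j * qp q (D / q) j * qp q w j / (qp q q j * qp q b j * qp q c j)) * y ^ j

/-- The inner sum with the weight that makes the double sum a convolution with `gCoef`;
`U` stands for `u⁻²`. -/
noncomputable def mCoef (q A D b c w y U : ℂ) (l : ℕ) : ℂ :=
  U ^ l * (qp q b l * qp q c l / (qp q A l * qp q D l)) * innerSum q A D b c w y l

/-- The convolution of `gCoef` and `mCoef`. Up to the factor `(u/(2α))^m (A;q)_m (D;q)_m` it is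
the associated continuous dual `q`-Hahn polynomial of degree `m`. -/
noncomputable def convCoef (q A D b c w y U : ℂ) (m : ℕ) : ℂ :=
  ∑ l ∈ Finset.range (m + 1), gCoef q w (m - l) * mCoef q A D b c w y U l

lemma qp_zero (q a : ℂ) : qp q a 0 = 1 := by simp [qp]

lemma qp_succ (q a : ℂ) (n : ℕ) : qp q a (n + 1) = qp q a n * (1 - a * q ^ n) := by
  simp [qp, Finset.prod_range_succ]

lemma qp_div_succ {q : ℂ} (hq : q ≠ 0) (a : ℂ) (n : ℕ) :
    qp q (a / q) (n + 1) = (1 - a / q) * qp q a n := by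
  unfold qp
  rw [Finset.prod_range_succ', mul_comm]
  congr 1
  · simp
  · refine Finset.prod_congr rfl fun j _ => ?_
    rw [pow_succ]
    field_simp

lemma qp_self_ne_zero {q : ℂ} (hq1 : ∀ k : ℕ, 1 - q ^ (k + 1) ≠ 0) (n : ℕ) : qp q q n ≠ 0 := by
  unfold qp
  refine Finset.prod_ne_zero_iff.2 fun j _ => ?_
  have := hq1 j
  rwa [pow_succ'] at this

lemma gCoef_succ {q : ℂ} (hq1 : ∀ k : ℕ, 1 - q ^ (k + 1) ≠ 0) (w : ℂ) (k : ℕ) :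
    (1 - q ^ (k + 1)) * gCoef q w (k + 1) = (1 - q / w * q ^ k) * gCoef q w k := by
  have h1 := qp_self_ne_zero hq1 k
  have h2 := hq1 k
  have h3 : (1 - q * q ^ k) = 1 - q ^ (k + 1) := by ring
  unfold gCoef
  rw [qp_succ, qp_succ, h3]
  field_simp

lemma rCoef_succ {q w : ℂ} (hw : w ≠ 0) (hq1 : ∀ k : ℕ, 1 - q ^ (k + 1) ≠ 0) (k : ℕ) :
    (1 - q ^ (k + 1)) * rCoef q w (k + 1) = (q / w - q * q ^ k) * rCoef q w k := by
  have h1 := qp_self_ne_zero hq1 k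
  have h2 := hq1 k
  have h3 : (1 - q * q ^ k) = 1 - q ^ (k + 1) := by ring
  unfold rCoef
  rw [qp_succ, qp_succ, h3, pow_succ (q / w)]
  field_simp

/-- First-order inhomogeneous recurrence for the weighted inner sums: the increment of the inner
sum contributes a term in which `b`, `c` and all but the first factors of `(A/q;q)_l`, `(D/q;q)_l`
have cancelled. -/
lemma mCoef_succ {q A D b c w y U : ℂ} (hq : q ≠ 0) (hq1 : ∀ k : ℕ, 1 - q ^ (k + 1) ≠ 0)
    (hyU : U * y = q / w) (l : ℕ) (hA : qp q A (l + 1) ≠ 0) (hD : qp q D (l + 1) ≠ 0)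
    (hb : qp q b (l + 1) ≠ 0) (hc : qp q c (l + 1) ≠ 0) :
    (1 - A * q ^ l) * (1 - D * q ^ l) * mCoef q A D b c w y U (l + 1)
      - U * (1 - b * q ^ l) * (1 - c * q ^ l) * mCoef q A D b c w y U l
      = (1 - A / q) * (1 - D / q) * rCoef q w (l + 1) := by
  have h1 := qp_self_ne_zero hq1 (l + 1)
  unfold mCoef rCoef
  rw [show innerSum q A D b c w y (l + 1) = innerSum q A D b c w y l + _ from
    Finset.sum_range_succ _ _, ← hyU, qp_div_succ hq, qp_div_succ hq, mul_pow]
  rw [qp_succ] at hA hD hb hc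
  rw [qp_succ q A, qp_succ q D, qp_succ q b, qp_succ q c]
  generalize innerSum q A D b c w y l = S
  generalize qp q q (l + 1) = e at *
  obtain ⟨hA1, hA2⟩ := mul_ne_zero_iff.1 hA
  obtain ⟨hD1, hD2⟩ := mul_ne_zero_iff.1 hD
  obtain ⟨hb1, hb2⟩ := mul_ne_zero_iff.1 hb
  obtain ⟨hc1, hc2⟩ := mul_ne_zero_iff.1 hc
  generalize 1 - A * q ^ l = A' at *
  generalize 1 - D * q ^ l = D' at *
  generalize 1 - b * q ^ l = b' at *
  generalize 1 - c * q ^ l = c' at *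
  generalize 1 - A / q = A'' at *
  generalize 1 - D / q = D'' at *
  field_simp
  ring

/-! ### Generating series -/

open PowerSeries in
lemma rescale_C_eq (q a : ℂ) : rescale q (C a) = C a := by
  ext k
  cases k <;> simp [coeff_rescale, coeff_C]

open PowerSeries in
lemma gSeries_eq {q : ℂ} (hq1 : ∀ k : ℕ, 1 - q ^ (k + 1) ≠ 0) (w : ℂ) :
    (1 - C (q / w) * X) * rescale q (mk (gCoef q w)) = (1 - X) * mk (gCoef q w) := by
  ext k
  cases k with
  | zero =>
    simp only [sub_mul, mul_assoc, one_mul, map_sub, coeff_C_mul, coeff_zero_X_mul, coeff_rescale,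
      coeff_mk]
    ring
  | succ k =>
    simp only [sub_mul, mul_assoc, one_mul, map_sub, coeff_C_mul, coeff_succ_X_mul, coeff_rescale,
      coeff_mk]
    linear_combination -gCoef_succ hq1 w k

open PowerSeries in
lemma rSeries_eq {q w : ℂ} (hw : w ≠ 0) (hq1 : ∀ k : ℕ, 1 - q ^ (k + 1) ≠ 0) :
    (1 - C q * X) * rescale q (mk (rCoef q w)) = (1 - C (q / w) * X) * mk (rCoef q w) := by
  ext k
  cases k with
  | zero =>
    simp only [sub_mul, mul_assoc, one_mul, map_sub, coeff_C_mul, coeff_zero_X_mul, coeff_rescale,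
      coeff_mk]
    ring
  | succ k =>
    simp only [sub_mul, mul_assoc, one_mul, map_sub, coeff_C_mul, coeff_succ_X_mul, coeff_rescale,
      coeff_mk]
    linear_combination -rCoef_succ hw hq1 k

open PowerSeries in
/-- The product of the two infinite-product series is `1/(1 - X)`: `(1 - X)` times it is
invariant under `X ↦ qX`, hence constant. -/
lemma rSeries_mul_gSeries {q w : ℂ} (hw : w ≠ 0) (hq1 : ∀ k : ℕ, 1 - q ^ (k + 1) ≠ 0) :
    (1 - X) * mk (rCoef q w) * mk (gCoef q w) = 1 := by
  have hg := gSeries_eq hq1 w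
  have hr := rSeries_eq hw hq1
  set G := mk (gCoef q w) with hG
  set R := mk (rCoef q w) with hR
  have hinv : rescale q ((1 - X) * R * G) = (1 - X) * R * G := by
    simp only [map_mul, map_sub, map_one, rescale_X]
    linear_combination rescale q G * hr + R * hg
  ext k
  cases k with
  | zero => simp [hG, hR, gCoef, rCoef, qp_zero]
  | succ k =>
    have h := congrArg (coeff (k + 1)) hinv
    rw [coeff_rescale] at h
    have h0 : (1 - q ^ (k + 1)) * coeff (k + 1) ((1 - X) * R * G) = 0 := by
      linear_combination -h
    rw [(mul_eq_zero.1 h0).resolve_left (hq1 k), coeff_one, if_neg k.succ_ne_zero]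

open PowerSeries in
/-- Functional equation of the generating series of `convCoef`, read off in degree `m ≤ n`. The
relation `bcUq = AD` makes the coefficient `AD/q² - bcUX` of the second `q`-shift of the series of
`mCoef` divisible by `1 - qX`, which is what clears the denominators. Nonvanishing is only
available up to `n`, so the equation for the series of `mCoef` holds modulo `X^(n+1)`. -/
lemma convCoef_functional {q A D b c w y U : ℂ} (hq : q ≠ 0) (hw : w ≠ 0)
    (hq1 : ∀ k : ℕ, 1 - q ^ (k + 1) ≠ 0)
    (hyU : U * y = q / w) (hAD : b * c * U * q = A * D) (n : ℕ)
    (hA : ∀ l ≤ n, qp q A l ≠ 0) (hD : ∀ l ≤ n, qp q D l ≠ 0)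
    (hb : ∀ l ≤ n, qp q b l ≠ 0) (hc : ∀ l ≤ n, qp q c l ≠ 0) (m : ℕ) (hm : m ≤ n) :
    let Q := mk (convCoef q A D b c w y U)
    coeff m ((1 - X) * (1 - C U * X) * Q
        - (C ((A + D) / q) - C (U * (b + c)) * X) * (1 - C (q / w) * X) * rescale q Q
        + C (A * D / q ^ 2) * (1 - C (q / w) * X) * (1 - C (q ^ 2 / w) * X)
          * rescale q (rescale q Q))
      = coeff m (C ((1 - A / q) * (1 - D / q))) := by
  intro Q
  have hg := gSeries_eq hq1 w
  have hrg := rSeries_mul_gSeries hw hq1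
  set G := mk (gCoef q w) with hG
  set R := mk (rCoef q w) with hR
  set M := mk (mCoef q A D b c w y U) with hM
  have hQ : Q = G * M := by
    ext k
    rw [mul_comm, coeff_mul, Finset.Nat.sum_antidiagonal_eq_sum_range_succ_mk]
    simp [Q, hG, hM, convCoef, mul_comm]
  have hg2 : (1 - C (q ^ 2 / w) * X) * rescale q (rescale q G) = (1 - C q * X) * rescale q G := by
    have h := congrArg (rescale q) hg
    simp only [map_mul, map_sub, map_one, rescale_X, rescale_C_eq] at h
    rw [← h, show q ^ 2 / w = q / w * q by ring, map_mul]
    ring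
  set K := C ((1 - A / q) * (1 - D / q)) with hK
  -- the error term in the equation satisfied by `M`
  set E := (1 - C U * X) * M - (C ((A + D) / q) - C (U * (b + c)) * X) * rescale q M
    + C (A * D / q ^ 2) * (1 - C q * X) * rescale q (rescale q M) - K * R with hE
  have hE0 : X ^ (n + 1) ∣ E := by
    rw [X_pow_dvd_iff]
    intro k hk
    rw [hE]
    cases k with
    | zero =>
      simp only [hM, hR, hK, sub_mul, mul_sub, mul_one, mul_assoc, one_mul, map_sub, map_add,
        coeff_C_mul, coeff_zero_X_mul, coeff_rescale, coeff_mk]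
      simp [mCoef, innerSum, rCoef, qp_zero]
      field_simp
      ring
    | succ k =>
      have hk' : k + 1 ≤ n := by omega
      simp only [hM, hR, hK, sub_mul, mul_sub, mul_one, mul_assoc, one_mul, map_sub, map_add,
        coeff_C_mul, coeff_succ_X_mul, coeff_rescale, coeff_mk]
      have h := mCoef_succ (w := w) hq hq1 hyU k (hA _ hk') (hD _ hk') (hb _ hk') (hc _ hk')
      have h2 : A * D / q ^ 2 = b * c * U / q := by rw [← hAD]; field_simp
      have h3 : A * D / q ^ 2 * (q ^ (k + 1) * q ^ (k + 1)) = A * D * (q ^ k * q ^ k) := by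
        rw [pow_succ]; field
      have h4 : A * D / q ^ 2 * q = b * c * U := by rw [h2]; field_simp
      have h5 : (A + D) / q * q ^ (k + 1) = (A + D) * q ^ k := by
        rw [pow_succ]; field_simp
      linear_combination h + h3 * mCoef q A D b c w y U (k + 1)
        - h4 * q ^ k * q ^ k * mCoef q A D b c w y U k - h5 * mCoef q A D b c w y U (k + 1)
  have key : (1 - X) * (1 - C U * X) * Q
        - (C ((A + D) / q) - C (U * (b + c)) * X) * (1 - C (q / w) * X) * rescale q Q
        + C (A * D / q ^ 2) * (1 - C (q / w) * X) * (1 - C (q ^ 2 / w) * X)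
          * rescale q (rescale q Q) = K + E * ((1 - X) * G) := by
    have hQ1 : rescale q Q = rescale q G * rescale q M := by rw [hQ, map_mul]
    have hQ2 : rescale q (rescale q Q) = rescale q (rescale q G) * rescale q (rescale q M) := by
      rw [hQ1, map_mul]
    rw [hQ2, hQ1, hQ, hE]
    linear_combination K * hrg
      - (C ((A + D) / q) - C (U * (b + c)) * X) * rescale q M * hg
      + C (A * D / q ^ 2) * rescale q (rescale q M)
        * ((1 - C (q / w) * X) * hg2 + (1 - C q * X) * hg)
  rw [key, map_add, X_pow_dvd_iff.1 (hE0.mul_right _) m (by omega), add_zero]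

/-! ### Three-term recurrence of the convolution -/

lemma convCoef_zero (q A D b c w y U : ℂ) : convCoef q A D b c w y U 0 = 1 := by
  simp [convCoef, gCoef, mCoef, innerSum, qp_zero]

open PowerSeries in
lemma convCoef_one {q A D b c w y U : ℂ} (hq : q ≠ 0) (hw : w ≠ 0)
    (hq1 : ∀ k : ℕ, 1 - q ^ (k + 1) ≠ 0)
    (hyU : U * y = q / w) (hAD : b * c * U * q = A * D) (n : ℕ)
    (hA : ∀ l ≤ n, qp q A l ≠ 0) (hD : ∀ l ≤ n, qp q D l ≠ 0)
    (hb : ∀ l ≤ n, qp q b l ≠ 0) (hc : ∀ l ≤ n, qp q c l ≠ 0) (hn : 1 ≤ n) :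
    (1 - A) * (1 - D) * convCoef q A D b c w y U 1
      = 1 + U - ((A + D) / w + U * (b + c)) + A * D / w * (1 + q) / q := by
  have h := convCoef_functional hq hw hq1 hyU hAD n hA hD hb hc 1 hn
  have e : ∀ F : PowerSeries ℂ, coeff 1 (X * F) = coeff 0 F := fun F => coeff_succ_X_mul 0 F
  simp only [sub_mul, mul_sub, mul_one, mul_assoc, one_mul, map_sub, map_add, coeff_C_mul,
    e, coeff_zero_X_mul, coeff_rescale, coeff_mk, coeff_C, one_ne_zero, if_false,
    pow_zero, pow_one, convCoef_zero] at h
  field_simp at h ⊢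
  refine mul_left_cancel₀ hw ?_
  linear_combination h

open PowerSeries in
lemma convCoef_succ_succ {q A D b c w y U : ℂ} (hq : q ≠ 0) (hw : w ≠ 0)
    (hq1 : ∀ k : ℕ, 1 - q ^ (k + 1) ≠ 0)
    (hyU : U * y = q / w) (hAD : b * c * U * q = A * D) (n : ℕ)
    (hA : ∀ l ≤ n, qp q A l ≠ 0) (hD : ∀ l ≤ n, qp q D l ≠ 0)
    (hb : ∀ l ≤ n, qp q b l ≠ 0) (hc : ∀ l ≤ n, qp q c l ≠ 0) (m : ℕ) (hm : m + 2 ≤ n) :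
    (1 - A * q ^ (m + 1)) * (1 - D * q ^ (m + 1)) * convCoef q A D b c w y U (m + 2)
      = (1 + U - ((A + D) / w + U * (b + c)) * q ^ (m + 1)
          + A * D / w * (1 + q) * q ^ (2 * m + 1)) * convCoef q A D b c w y U (m + 1)
        - U * (1 - c * q / w * q ^ m) * (1 - b * q / w * q ^ m) * convCoef q A D b c w y U m := by
  have h := convCoef_functional hq hw hq1 hyU hAD n hA hD hb hc (m + 2) hm
  have e : ∀ F : PowerSeries ℂ, coeff (m + 2) (X * F) = coeff (m + 1) F :=
    fun F => coeff_succ_X_mul (m + 1) F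
  simp only [sub_mul, mul_sub, mul_one, mul_assoc, one_mul, map_sub, map_add, coeff_C_mul,
    e, coeff_succ_X_mul, coeff_rescale, coeff_mk, coeff_C,
    if_neg (show m + 2 ≠ 0 by omega), pow_succ] at h
  simp only [pow_succ, two_mul, pow_add]
  field_simp at h ⊢
  linear_combination h + q * (q ^ m) ^ 2 * convCoef q A D b c w y U m * hAD

/-! ### Comparison with the explicit formula -/

/-- The `n`-dependent factors of the `l`-th term of the explicit formula reduce to `gCoef` at
`n - l`; written without division by `(wq^{-n};q)_l`. -/
lemma gCoef_reversal {q w : ℂ} (hq : q ≠ 0) (hw : w ≠ 0)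
    (hq1 : ∀ k : ℕ, 1 - q ^ (k + 1) ≠ 0) (U : ℂ) (n l : ℕ) (hl : l ≤ n) :
    gCoef q w n * qp q (q ^ (-(n : ℤ))) l * (w * U) ^ l
      = gCoef q w (n - l) * U ^ l * qp q (w * q ^ (-(n : ℤ))) l := by
  induction l with
  | zero => simp [qp_zero]
  | succ l ih =>
    obtain ⟨k, rfl⟩ : ∃ k, n = l + 1 + k := ⟨n - (l + 1), by omega⟩
    have ih' := ih (by omega)
    rw [show l + 1 + k - l = k + 1 by omega] at ih'
    rw [show l + 1 + k - (l + 1) = k by omega]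
    have h := gCoef_succ hq1 w k
    have hx : q ^ (-((l + 1 + k : ℕ) : ℤ)) * q ^ l * q ^ (k + 1) = 1 := by
      rw [mul_assoc, ← pow_add, zpow_neg, zpow_natCast, show l + 1 + k = l + (k + 1) by ring]
      exact inv_mul_cancel₀ (pow_ne_zero _ hq)
    rw [qp_succ, qp_succ, pow_succ (w * U), pow_succ U]
    have hwx : 1 - w * q ^ (-((l + 1 + k : ℕ) : ℤ)) * q ^ l
        = -w * (q ^ (-((l + 1 + k : ℕ) : ℤ)) * q ^ l) * (1 - q / w * q ^ k) := by
      generalize q ^ (-((l + 1 + k : ℕ) : ℤ)) = x at *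
      field_simp
      linear_combination -hx
    have hx1 : 1 - q ^ (-((l + 1 + k : ℕ) : ℤ)) * q ^ l
        = -(q ^ (-((l + 1 + k : ℕ) : ℤ)) * q ^ l) * (1 - q ^ (k + 1)) := by
      linear_combination -hx
    rw [hwx, hx1]
    linear_combination
      -(q ^ (-((l + 1 + k : ℕ) : ℤ)) * q ^ l) * (1 - q ^ (k + 1)) * w * U * ih'
      - U ^ (l + 1) * w * (q ^ (-((l + 1 + k : ℕ) : ℤ)) * q ^ l)
        * qp q (w * q ^ (-((l + 1 + k : ℕ) : ℤ))) l * h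

/-- The monic associated polynomials are the normalized convolution coefficients: both satisfy
the same three-term recurrence with the same initial values. Here `s` stands for `2α`. -/
lemma Prec_eq_convCoef {q A B C D s u z : ℂ} (hq : q ≠ 0) (hq1 : ∀ k : ℕ, 1 - q ^ (k + 1) ≠ 0)
    (hA0 : A ≠ 0) (hB0 : B ≠ 0) (hC0 : C ≠ 0) (hD0 : D ≠ 0) (hu : u ≠ 0) (hs0 : s ≠ 0)
    (hs : s ^ 2 * q = A * B * C * D) (hz : z = (u + 1 / u) / s) (n : ℕ)
    (hA : ∀ l ≤ n, qp q A l ≠ 0) (hD : ∀ l ≤ n, qp q D l ≠ 0)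
    (hb : ∀ l ≤ n, qp q (s * u / B) l ≠ 0) (hc : ∀ l ≤ n, qp q (s * u / C) l ≠ 0)
    (m : ℕ) (hm : m ≤ n) :
    Prec (aCDH q A B C D) (bCDH q A B C D) z m
      = (u / s) ^ m * (qp q A m * qp q D m)
        * convCoef q A D (s * u / B) (s * u / C) (A * D * u / s) (s * u * q / (A * D))
            (1 / u ^ 2) m := by
  have hw : A * D * u / s ≠ 0 := by positivity
  have hyU : 1 / u ^ 2 * (s * u * q / (A * D)) = q / (A * D * u / s) := by field_simp
  have hAD : s * u / B * (s * u / C) * (1 / u ^ 2) * q = A * D := by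
    field_simp
    linear_combination hs
  have hbw : s * u / B * q / (A * D * u / s) = C := by
    field_simp
    linear_combination hs
  have hcw : s * u / C * q / (A * D * u / s) = B := by
    field_simp
    linear_combination hs
  have hABCD : q / (A * B * C * D) = 1 / s ^ 2 := by
    rw [← hs]; field_simp
  have h1 := convCoef_one hq hw hq1 hyU hAD n hA hD hb hc
  have h2 := convCoef_succ_succ hq hw hq1 hyU hAD n hA hD hb hc
  rw [hbw, hcw] at h2
  have h0 := convCoef_zero q A D (s * u / B) (s * u / C) (A * D * u / s) (s * u * q / (A * D))
            (1 / u ^ 2)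
  generalize convCoef q A D (s * u / B) (s * u / C) (A * D * u / s) (s * u * q / (A * D))
            (1 / u ^ 2) = Q at *
  induction m using Nat.strong_induction_on with
  | _ m ih =>
    match m with
    | 0 => simp [Prec, h0, qp_zero]
    | 1 =>
      have h := h1 hm
      simp only [Prec, aCDH, hz, qp_succ, qp_zero]
      have e : (2 * ((0 : ℕ) : ℤ) - 1) = -1 := by simp
      rw [e]
      simp only [Nat.cast_zero, zpow_zero, zpow_neg_one, pow_zero, pow_one, mul_one, one_mul]
      rw [mul_assoc, h]
      field_simp
      ring
    | m + 2 =>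
      have h := h2 m hm
      have i1 := ih (m + 1) (by omega) (by omega)
      have i0 := ih m (by omega) (by omega)
      rw [Prec, i1, i0, aCDH, bCDH, hABCD, hz]
      have e1 : (2 * ((m + 1 : ℕ) : ℤ) - 1) = ((2 * m + 1 : ℕ) : ℤ) := by push_cast; ring
      have e2 : ((m + 1 : ℕ) : ℤ) - 1 = (m : ℤ) := by push_cast; ring
      rw [e1, e2, zpow_natCast, zpow_natCast, zpow_natCast, qp_succ q A (m + 1),
        qp_succ q D (m + 1)]
      have hcoef : (u + 1 / u) / s - ((1 / A + 1 / B + 1 / C + 1 / D) * q ^ (m + 1)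
            - (1 + q) * q ^ (2 * m + 1))
          = u / s * (1 + 1 / u ^ 2
            - ((A + D) / (A * D * u / s) + 1 / u ^ 2 * (s * u / B + s * u / C)) * q ^ (m + 1)
            + A * D / (A * D * u / s) * (1 + q) * q ^ (2 * m + 1)) := by
        generalize q ^ (m + 1) = x
        generalize q ^ (2 * m + 1) = x'
        field_simp
        ring
      have hU : 1 / s ^ 2 = (u / s) ^ 2 * (1 / u ^ 2) := by field_simp
      rw [hcoef, hU, qp_succ q A m, qp_succ q D m]
      linear_combination (-(u / s) ^ (m + 2) * (qp q A m * (1 - A * q ^ m))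
        * (qp q D m * (1 - D * q ^ m))) * h

/-- Explicit formula (4.12) for the monic associated continuous dual q-Hahn polynomials. -/
theorem stmt9 (q : ℝ) (hq0 : 0 < q) (hq1 : q < 1)
    (A B C D u : ℂ) (hA : A ≠ 0) (hB : B ≠ 0) (hC : C ≠ 0) (hD : D ≠ 0) (hu : u ≠ 0)
    (α : ℂ) (hα : α ^ 2 = A * B * C * D / (4 * (q : ℂ))) (hα0 : α ≠ 0)
    (z : ℂ) (hz : z = (u + 1 / u) / (2 * α))
    (n : ℕ)
    (hAn : ∀ l ≤ n, qp q A l ≠ 0) (hDn : ∀ l ≤ n, qp q D l ≠ 0)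
    (hADu : ∀ l ≤ n, qp q (A * D * u * (q : ℂ) ^ (-(n : ℤ)) / (2 * α)) l ≠ 0)
    (hBu : ∀ j ≤ n, qp q (2 * α * u / B) j ≠ 0) (hCu : ∀ j ≤ n, qp q (2 * α * u / C) j ≠ 0) :
    Prec (aCDH q A B C D) (bCDH q A B C D) z n =
      (u / (2 * α)) ^ n *
        (qp q A n * qp q D n * qp q (2 * α * (q : ℂ) / (A * D * u)) n) / qp q q n *
        ∑ l ∈ Finset.range (n + 1),
          (qp q ((q : ℂ) ^ (-(n : ℤ))) l * qp q (2 * α * u / B) l * qp q (2 * α * u / C) l /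
              (qp q (A * D * u * (q : ℂ) ^ (-(n : ℤ)) / (2 * α)) l * qp q A l * qp q D l)) *
            (A * D / (2 * α * u)) ^ l *
            ∑ j ∈ Finset.range (l + 1),
              (qp q (A / q) j * qp q (D / q) j * qp q (A * D * u / (2 * α)) j /
                  (qp q q j * qp q (2 * α * u / B) j * qp q (2 * α * u / C) j)) *
                (2 * α * u * (q : ℂ) / (A * D)) ^ j := by
  have hqc : (q : ℂ) ≠ 0 := by exact_mod_cast hq0.ne'
  have hqk : ∀ k : ℕ, 1 - (q : ℂ) ^ (k + 1) ≠ 0 := fun k => by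
    have : 1 - q ^ (k + 1) ≠ 0 := (sub_pos.2 (pow_lt_one₀ hq0.le hq1 k.succ_ne_zero)).ne'
    exact_mod_cast this
  have hs0 : 2 * α ≠ 0 := mul_ne_zero two_ne_zero hα0
  have hs : (2 * α) ^ 2 * q = A * B * C * D := by
    rw [mul_pow, hα]
    field_simp
    norm_num
  rw [Prec_eq_convCoef hqc hqk hA hB hC hD hu hs0 hs hz n hAn hDn hBu hCu n le_rfl]
  generalize 2 * α = s at *
  have hw : A * D * u / s ≠ 0 := by positivity
  rw [convCoef, Finset.mul_sum, Finset.mul_sum]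
  refine Finset.sum_congr rfl fun l hl => ?_
  have hln : l ≤ n := by simpa [Nat.lt_succ_iff] using hl
  have hrev := gCoef_reversal hqc hw hqk (1 / u ^ 2) n l hln
  have e1 : A * D * u * (q : ℂ) ^ (-(n : ℤ)) / s = A * D * u / s * (q : ℂ) ^ (-(n : ℤ)) := by ring
  have e2 : A * D / (s * u) = A * D * u / s * (1 / u ^ 2) := by field_simp
  have e3 : gCoef q (A * D * u / s) n = qp q (s * q / (A * D * u)) n / qp q q n := by
    rw [gCoef]; congr 2; field_simp
  have h1 := hADu l hln
  rw [e1] at h1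
  rw [e1, e2, mCoef, innerSum]
  generalize (∑ j ∈ Finset.range (l + 1), _ : ℂ) = S
  have hprod : gCoef q (A * D * u / s) (n - l) * (1 / u ^ 2) ^ l
      = qp q (s * q / (A * D * u)) n / qp q q n * qp q ((q : ℂ) ^ (-(n : ℤ))) l
        * (A * D * u / s * (1 / u ^ 2)) ^ l / qp q (A * D * u / s * (q : ℂ) ^ (-(n : ℤ))) l := by
    rw [eq_div_iff h1, ← hrev, e3]
  generalize qp q (A * D * u / s * (q : ℂ) ^ (-(n : ℤ))) l = W at *
  linear_combination (u / s) ^ n * (qp q A n * qp q D n)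
    * (qp q (s * u / B) l * qp q (s * u / C) l / (qp q A l * qp q D l)) * S * hprod
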